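/- Let m ≡ 1 (mod 3) be an integer. Then for every positive integer n, the 3-adic valuation of (1/n)·∑_{k=0}^{n-1} (−1)^k·C(n−1,k)·C(2k,k)/m^k is at least min{ν₃(n), ν₃(m−1)} − 1. -/

import Mathlib

/-- Scaled central binomials `C(2k,k)/4^k`. -/
noncomputable def cc (k : ℕ) : ℚ_[3] := (Nat.centralBinom k : ℚ_[3]) / 4 ^ k

/-- The auxiliary quantity `(2j+1) c_j c_M / (j+M+1)`. -/
noncomputable def AA (j M : ℕ) : ℚ_[3] := (2 * j + 1) * cc j * cc M / (j + M + 1)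

/-- The closed form of the finite differences of `cc`. -/
noncomputable def GG (M j : ℕ) : ℚ_[3] :=
  cc j * cc M * (j.factorial : ℚ_[3]) * (M.factorial : ℚ_[3]) / ((M + j).factorial : ℚ_[3])

lemma cc_succ (k : ℕ) : 2 * ((k : ℚ_[3]) + 1) * cc (k + 1) = (2 * k + 1) * cc k := by
  have h : ((k : ℚ_[3]) + 1) * (Nat.centralBinom (k + 1) : ℚ_[3])
      = 2 * (2 * k + 1) * (Nat.centralBinom k : ℚ_[3]) := by
    exact_mod_cast Nat.succ_mul_centralBinom_succ k
  unfold cc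
  rw [pow_succ]
  field_simp
  linear_combination 2 * h

lemma norm_four : ‖(4 : ℚ_[3])‖ = 1 := by
  have := (Padic.norm_natCast_eq_one_iff (p := 3) (n := 4)).2 (by norm_num)
  exact_mod_cast this

lemma norm_cc (k : ℕ) : ‖cc k‖ ≤ 1 := by
  unfold cc
  rw [norm_div, norm_pow, norm_four]
  simpa using IsUltrametricDist.norm_natCast_le_one ℚ_[3] (Nat.centralBinom k)

lemma nat_ne (k : ℕ) : ((k : ℚ_[3]) + 1) ≠ 0 := by exact_mod_cast Nat.succ_ne_zero k

lemma odd_ne (k : ℕ) : (2 * (k : ℚ_[3]) + 1) ≠ 0 := by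
  exact_mod_cast Nat.succ_ne_zero (2 * k)

lemma AA_succ (j M : ℕ) :
    AA (j + 1) M = AA j (M + 1) + 2 * cc (j + 1) * (cc M - cc (M + 1)) := by
  have h1 := cc_succ j
  have h2 := cc_succ M
  have n1 := nat_ne j
  have n2 := nat_ne M
  have n3 : (j : ℚ_[3]) + M + 1 + 1 ≠ 0 := by exact_mod_cast Nat.succ_ne_zero (j + M + 1)
  have e1 : cc (j + 1) = (2 * j + 1) * cc j / (2 * ((j : ℚ_[3]) + 1)) := by
    field_simp; linear_combination h1
  have e2 : cc (M + 1) = (2 * M + 1) * cc M / (2 * ((M : ℚ_[3]) + 1)) := by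
    field_simp; linear_combination h2
  unfold AA
  rw [e1, e2]
  push_cast
  have n4 : (j : ℚ_[3]) + 1 + M + 1 ≠ 0 := by convert n3 using 1; ring
  have n5 : (j : ℚ_[3]) + (M + 1) + 1 ≠ 0 := by convert n3 using 1; ring
  field_simp
  ring

lemma AA_succ' (j M : ℕ) :
    AA (j + 1) M - AA j (M + 1) =
      AA j (M + 1) * ((j : ℚ_[3]) + M + 2) / ((j + 1) * (2 * M + 1)) := by
  have h1 := cc_succ j
  have h2 := cc_succ M
  have n1 := nat_ne j
  have n2 := nat_ne M
  have n6 := odd_ne M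
  have n3 : (j : ℚ_[3]) + M + 1 + 1 ≠ 0 := by exact_mod_cast Nat.succ_ne_zero (j + M + 1)
  have e1 : cc (j + 1) = (2 * j + 1) * cc j / (2 * ((j : ℚ_[3]) + 1)) := by
    field_simp; linear_combination h1
  have e2 : cc (M + 1) = (2 * M + 1) * cc M / (2 * ((M : ℚ_[3]) + 1)) := by
    field_simp; linear_combination h2
  unfold AA
  rw [e1, e2]
  push_cast
  have n4 : (j : ℚ_[3]) + 1 + M + 1 ≠ 0 := by convert n3 using 1; ring
  have n5 : (j : ℚ_[3]) + (M + 1) + 1 ≠ 0 := by convert n3 using 1; ring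
  field_simp
  ring

lemma norm_add_le_of {x y : ℚ_[3]} {r : ℝ} (hx : ‖x‖ ≤ r) (hy : ‖y‖ ≤ r) : ‖x + y‖ ≤ r :=
  (Padic.nonarchimedean x y).trans (max_le hx hy)

lemma norm_sub_le_of {x y : ℚ_[3]} {r : ℝ} (hx : ‖x‖ ≤ r) (hy : ‖y‖ ≤ r) : ‖x - y‖ ≤ r := by
  rw [sub_eq_add_neg]
  exact norm_add_le_of hx (by rwa [norm_neg])

lemma norm_sum_le_of {f : ℕ → ℚ_[3]} {r : ℝ} (hr : 0 ≤ r) (n : ℕ)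
    (h : ∀ j < n, ‖f j‖ ≤ r) : ‖∑ j ∈ Finset.range n, f j‖ ≤ r := by
  induction n with
  | zero => simpa using hr
  | succ n ih =>
    rw [Finset.sum_range_succ]
    exact norm_add_le_of (ih fun j hj => h j (by omega)) (h n (by omega))

lemma norm_two : ‖(2 : ℚ_[3])‖ = 1 := by
  have := (Padic.norm_natCast_eq_one_iff (p := 3) (n := 2)).2 (by norm_num)
  exact_mod_cast this

lemma norm_mul_le_one {x y : ℚ_[3]} (hx : ‖x‖ ≤ 1) (hy : ‖y‖ ≤ 1) : ‖x * y‖ ≤ 1 := by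
  rw [norm_mul]; exact mul_le_one₀ hx (norm_nonneg _) hy

lemma norm_AA (j : ℕ) : ∀ M, ‖AA j M‖ ≤ 1 := by
  induction j with
  | zero =>
    intro M
    have h2 := cc_succ M
    have n2 := nat_ne M
    have : AA 0 M = 2 * (cc M - cc (M + 1)) := by
      have e2 : cc (M + 1) = (2 * M + 1) * cc M / (2 * ((M : ℚ_[3]) + 1)) := by
        field_simp; linear_combination h2
      unfold AA
      rw [e2]
      simp [cc]
      field_simp
      ring
    rw [this]
    exact norm_mul_le_one norm_two.le (norm_sub_le_of (norm_cc _) (norm_cc _))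
  | succ j ih =>
    intro M
    rw [AA_succ]
    exact norm_add_le_of (ih _) (norm_mul_le_one (norm_mul_le_one norm_two.le (norm_cc _))
      (norm_sub_le_of (norm_cc _) (norm_cc _)))

lemma GG_succ (M j : ℕ) : GG (M + 1) j = GG M j - GG M (j + 1) := by
  have h1 := cc_succ j
  have h2 := cc_succ M
  have n1 := nat_ne j
  have n2 := nat_ne M
  have n3 : (M : ℚ_[3]) + j + 1 ≠ 0 := by exact_mod_cast Nat.succ_ne_zero (M + j)
  have e1 : cc (j + 1) = (2 * j + 1) * cc j / (2 * ((j : ℚ_[3]) + 1)) := by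
    field_simp; linear_combination h1
  have e2 : cc (M + 1) = (2 * M + 1) * cc M / (2 * ((M : ℚ_[3]) + 1)) := by
    field_simp; linear_combination h2
  have n4 : ((M + j).factorial : ℚ_[3]) ≠ 0 := by exact_mod_cast Nat.factorial_ne_zero _
  unfold GG
  rw [e1, e2, show M + 1 + j = (M + j) + 1 by ring, show M + (j + 1) = (M + j) + 1 by ring,
    Nat.factorial_succ, Nat.factorial_succ, Nat.factorial_succ]
  push_cast
  field_simp
  ring

lemma sum_identity (w : ℚ_[3]) (N : ℕ) : ∀ M a,
    ∑ k ∈ Finset.range (N + 1), (N.choose k : ℚ_[3]) * ((w - 1) ^ k * GG M (k + a)) =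
    ∑ j ∈ Finset.range (N + 1), (N.choose j : ℚ_[3]) * (w ^ j * GG (M + (N - j)) (j + a)) := by
  induction N with
  | zero => intro M a; simp
  | succ N ih =>
    intro M a
    have L := Finset.sum_choose_succ_mul (fun k _ => (w - 1) ^ k * GG M (k + a)) N
    have R := Finset.sum_choose_succ_mul (fun k i => w ^ k * GG (M + i) (k + a)) N
    have i1 := ih M a
    have i2 := ih M (a + 1)
    have L2 : ∑ i ∈ Finset.range (N + 1), (N.choose i : ℚ_[3]) *
        ((w - 1) ^ (i + 1) * GG M (i + 1 + a)) = (w - 1) *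
        ∑ k ∈ Finset.range (N + 1), (N.choose k : ℚ_[3]) * ((w - 1) ^ k * GG M (k + (a + 1))) := by
      rw [Finset.mul_sum]
      refine Finset.sum_congr rfl fun i _ => ?_
      rw [show i + 1 + a = i + (a + 1) by ring]; ring
    have R2 : ∑ i ∈ Finset.range (N + 1), (N.choose i : ℚ_[3]) *
        (w ^ (i + 1) * GG (M + (N - i)) (i + 1 + a)) = w *
        ∑ k ∈ Finset.range (N + 1), (N.choose k : ℚ_[3]) *
          (w ^ k * GG (M + (N - k)) (k + (a + 1))) := by
      rw [Finset.mul_sum]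
      refine Finset.sum_congr rfl fun i _ => ?_
      rw [show i + 1 + a = i + (a + 1) by ring]; ring
    have R1 : ∑ i ∈ Finset.range (N + 1), (N.choose i : ℚ_[3]) *
        (w ^ i * GG (M + (N + 1 - i)) (i + a)) =
        ∑ k ∈ Finset.range (N + 1), (N.choose k : ℚ_[3]) * (w ^ k * GG (M + (N - k)) (k + a)) -
        ∑ k ∈ Finset.range (N + 1), (N.choose k : ℚ_[3]) *
          (w ^ k * GG (M + (N - k)) (k + (a + 1))) := by
      rw [← Finset.sum_sub_distrib]
      refine Finset.sum_congr rfl fun i hi => ?_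
      have := Finset.mem_range.1 hi
      rw [show M + (N + 1 - i) = (M + (N - i)) + 1 by omega, GG_succ,
        show i + (a + 1) = i + a + 1 by ring]
      ring
    rw [show N + 1 + 1 = N + 2 by ring]
    rw [L, R, L2, R2, R1, i1, i2]
    ring

lemma choose_GG (N j : ℕ) (hj : j ≤ N) : (N.choose j : ℚ_[3]) * GG (N - j) j = cc j * cc (N - j) := by
  have h : (N.choose j : ℚ_[3]) * j.factorial * (N - j).factorial = N.factorial := by
    exact_mod_cast Nat.choose_mul_factorial_mul_factorial hj
  have n4 : (N.factorial : ℚ_[3]) ≠ 0 := by exact_mod_cast Nat.factorial_ne_zero _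
  unfold GG
  rw [Nat.sub_add_cancel hj]
  field_simp
  linear_combination cc j * cc (N - j) * h

lemma S_eq (m : ℚ_[3]) (hm : m ≠ 0) (N : ℕ) :
    ∑ k ∈ Finset.range (N + 1), (-1) ^ k * (N.choose k : ℚ_[3]) * (Nat.choose (2 * k) k : ℚ_[3]) /
      m ^ k = ∑ j ∈ Finset.range (N + 1), cc j * cc (N - j) * (1 - 4 / m) ^ j := by
  have := sum_identity (1 - 4 / m) N 0 0
  convert this using 1
  · refine Finset.sum_congr rfl fun k _ => ?_
    have n4 : (k.factorial : ℚ_[3]) ≠ 0 := by exact_mod_cast Nat.factorial_ne_zero _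
    have : (1 - 4 / m - 1) ^ k = (-1) ^ k * 4 ^ k / m ^ k := by
      rw [show 1 - 4 / m - 1 = (-1 * 4) / m by ring, div_pow, mul_pow]
    rw [this]
    simp [GG, cc, Nat.centralBinom]
    field_simp
  · refine Finset.sum_congr rfl fun j hj => ?_
    have := choose_GG N j (by have := Finset.mem_range.1 hj; omega)
    simp only [zero_add, add_zero]
    linear_combination -(1 - 4 / m) ^ j * this

lemma trig (K n : ℕ) (hn : n ≤ 2 * K) :
    ∑ j ∈ Finset.range (K + 1), ((n + 1).choose (2 * j) : ℚ_[3]) * (-3) ^ j =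
      ∑ j ∈ Finset.range (K + 1), (n.choose (2 * j) : ℚ_[3]) * (-3) ^ j
      - 3 * ∑ j ∈ Finset.range (K + 1), (n.choose (2 * j + 1) : ℚ_[3]) * (-3) ^ j := by
  have h0 : (n.choose (2 * K + 1) : ℚ_[3]) = 0 := by
    rw [Nat.choose_eq_zero_of_lt (by omega)]; simp
  rw [Finset.sum_range_succ (fun j => (n.choose (2 * j + 1) : ℚ_[3]) * (-3) ^ j), h0,
    Finset.sum_range_succ', Finset.sum_range_succ' (fun j => (n.choose (2 * j) : ℚ_[3]) * (-3) ^ j),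
    zero_mul, add_zero, Finset.mul_sum]
  simp only [mul_zero, Nat.choose_zero_right]
  rw [add_sub_right_comm, ← Finset.sum_sub_distrib]
  congr 1
  refine Finset.sum_congr rfl fun j _ => ?_
  rw [show 2 * (j + 1) = (2 * j + 1) + 1 by ring, Nat.choose_succ_succ]
  push_cast
  ring

lemma trig' (K n : ℕ) :
    ∑ j ∈ Finset.range (K + 1), ((n + 1).choose (2 * j + 1) : ℚ_[3]) * (-3) ^ j =
      ∑ j ∈ Finset.range (K + 1), (n.choose (2 * j) : ℚ_[3]) * (-3) ^ j
      + ∑ j ∈ Finset.range (K + 1), (n.choose (2 * j + 1) : ℚ_[3]) * (-3) ^ j := by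
  rw [← Finset.sum_add_distrib]
  refine Finset.sum_congr rfl fun j _ => ?_
  rw [Nat.choose_succ_succ]
  push_cast
  ring

lemma trig_zero (K t : ℕ) (h : 3 * t ≤ 2 * K) :
    ∑ j ∈ Finset.range (K + 1), ((3 * t).choose (2 * j + 1) : ℚ_[3]) * (-3) ^ j = 0 := by
  induction t with
  | zero => simp
  | succ t ih =>
    have i := ih (by omega)
    rw [show 3 * (t + 1) = 3 * t + 1 + 1 + 1 by ring, trig', trig _ _ (by omega),
      trig' K (3 * t + 1), trig _ _ (by omega), trig' K (3 * t), i]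
    ring

lemma norm_nat_eq (k : ℕ) (hk : k ≠ 0) :
    ‖(k : ℚ_[3])‖ = (3 : ℝ) ^ (-(padicValNat 3 k : ℤ)) := by
  rw [Padic.norm_eq_zpow_neg_valuation (by exact_mod_cast hk), Padic.valuation_natCast]
  norm_num

lemma norm_nat_ge (k : ℕ) (hk : k ≠ 0) : ‖(k : ℚ_[3])⁻¹‖ ≤ (3 : ℝ) ^ (Nat.log 3 k : ℤ) := by
  rw [norm_inv, norm_nat_eq k hk]
  rw [← zpow_neg, neg_neg]
  refine zpow_le_zpow_right₀ (by norm_num) ?_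
  exact_mod_cast padicValNat_le_nat_log k

lemma choose_close (n s : ℕ) (hs : ‖((n + 1 : ℕ) : ℚ_[3])‖ ≤ (3 : ℝ) ^ (-(s : ℤ))) (k : ℕ) :
    ‖(-1) ^ k * (n.choose k : ℚ_[3]) - 1‖ ≤ (3 : ℝ) ^ ((Nat.log 3 k : ℤ) - s) := by
  induction k with
  | zero => simp
  | succ k ih =>
    have h : ((n + 1 : ℕ) : ℚ_[3]) * n.choose k = ((n + 1).choose (k + 1)) * ((k + 1 : ℕ) : ℚ_[3]) := by
      exact_mod_cast Nat.add_one_mul_choose_eq n k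
    rw [Nat.choose_succ_succ] at h
    have nk : ((k + 1 : ℕ) : ℚ_[3]) ≠ 0 := by exact_mod_cast Nat.succ_ne_zero k
    have e : (-1) ^ (k + 1) * (n.choose (k + 1) : ℚ_[3]) - 1 = ((-1) ^ k * (n.choose k : ℚ_[3]) - 1)
        + (((n + 1 : ℕ) : ℚ_[3]) * ((k + 1 : ℕ) : ℚ_[3])⁻¹) * ((-1) ^ (k + 1) * n.choose k) := by
      have : ((n + 1 : ℕ) : ℚ_[3]) * n.choose k * ((k + 1 : ℕ) : ℚ_[3])⁻¹ =
          n.choose k + n.choose (k + 1) := by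
        rw [h]; field_simp; push_cast; ring
      rw [pow_succ]
      linear_combination (-1) ^ k * this
    rw [e]
    refine norm_add_le_of (ih.trans (zpow_le_zpow_right₀ (by norm_num) ?_)) ?_
    · have := Nat.log_mono_right (b := 3) (show k ≤ k + 1 by omega)
      omega
    · have h1 : ‖(-1) ^ (k + 1) * (n.choose k : ℚ_[3])‖ ≤ 1 := by
        simpa using IsUltrametricDist.norm_natCast_le_one ℚ_[3] (n.choose k)
      have h2 := norm_nat_ge (k + 1) (by omega)
      rw [norm_mul, norm_mul, sub_eq_neg_add, zpow_add₀ (by norm_num)]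
      calc _ ≤ ((3 : ℝ) ^ (-(s : ℤ)) * (3 : ℝ) ^ (Nat.log 3 (k + 1) : ℤ)) * 1 := by gcongr
        _ = _ := by ring

lemma AA_close (s : ℕ) (j : ℕ) : ∀ M, ‖((j + M + 1 : ℕ) : ℚ_[3])‖ ≤ (3 : ℝ) ^ (-(s : ℤ)) →
    ‖AA j M - AA 0 (j + M)‖ ≤ (3 : ℝ) ^ ((Nat.log 3 (2 * j + 1) : ℤ) - s) := by
  induction j with
  | zero => intro M _; simp
  | succ j ih =>
    intro M hs
    by_cases hL : s ≤ Nat.log 3 (2 * (j + 1) + 1)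
    · refine (norm_sub_le_of (norm_AA _ _) (norm_AA _ _)).trans ?_
      exact one_le_zpow₀ (by norm_num) (by omega)
    have i := ih (M + 1) (by rwa [show j + (M + 1) + 1 = j + 1 + M + 1 by ring])
    rw [show j + (M + 1) = j + 1 + M by ring] at i
    rw [← sub_add_sub_cancel _ (AA j (M + 1))]
    refine norm_add_le_of ?_ (i.trans (zpow_le_zpow_right₀ (by norm_num) ?_))
    swap
    · have := Nat.log_mono_right (b := 3) (show 2 * j + 1 ≤ 2 * (j + 1) + 1 by omega)
      omega
    rw [AA_succ']
    have o1 := norm_nat_ge (2 * (j + 1) + 1) (by omega)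
    have o2 := (norm_nat_ge (j + 1) (by omega)).trans (zpow_le_zpow_right₀ (by norm_num)
      (show (Nat.log 3 (j + 1) : ℤ) ≤ Nat.log 3 (2 * (j + 1) + 1) by
        exact_mod_cast Nat.log_mono_right (by omega)))
    have hM : ‖((2 * M + 1 : ℕ) : ℚ_[3])‖ = ‖((2 * (j + 1) + 1 : ℕ) : ℚ_[3])‖ := by
      have e : ((2 * M + 1 : ℕ) : ℚ_[3]) =
          2 * ((j + 1 + M + 1 : ℕ) : ℚ_[3]) + -((2 * (j + 1) + 1 : ℕ) : ℚ_[3]) := by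
        push_cast; ring
      have lt : ‖2 * ((j + 1 + M + 1 : ℕ) : ℚ_[3])‖ < ‖-((2 * (j + 1) + 1 : ℕ) : ℚ_[3])‖ := by
        rw [norm_mul, norm_two, one_mul, norm_neg]
        refine lt_of_le_of_lt hs ?_
        have p : 0 < ‖((2 * (j + 1) + 1 : ℕ) : ℚ_[3])‖ := by
          rw [norm_pos_iff]; exact_mod_cast Nat.succ_ne_zero (2 * (j + 1))
        rw [norm_inv] at o1
        have := inv_le_of_inv_le₀ p o1
        refine lt_of_lt_of_le ?_ this
        rw [← zpow_neg]
        exact zpow_lt_zpow_right₀ (by norm_num) (by omega)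
      rw [e, Padic.add_eq_max_of_ne lt.ne, max_eq_right lt.le, norm_neg]
    have key : ‖((j + 1 : ℕ) : ℚ_[3])⁻¹‖ * ‖((2 * M + 1 : ℕ) : ℚ_[3])⁻¹‖ ≤
        (3 : ℝ) ^ (Nat.log 3 (2 * (j + 1) + 1) : ℤ) := by
      rw [norm_inv ((2 * M + 1 : ℕ) : ℚ_[3]), hM, ← norm_inv]
      by_cases h3 : 3 ∣ j + 1
      · have : ‖((2 * (j + 1) + 1 : ℕ) : ℚ_[3])‖ = 1 :=
          Padic.norm_natCast_eq_one_iff.2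
            ((Nat.Prime.coprime_iff_not_dvd Nat.prime_three).2 (by omega))
        rw [norm_inv ((2 * (j + 1) + 1 : ℕ) : ℚ_[3]), this]
        simpa using o2
      · have : ‖((j + 1 : ℕ) : ℚ_[3])‖ = 1 :=
          Padic.norm_natCast_eq_one_iff.2
            ((Nat.Prime.coprime_iff_not_dvd Nat.prime_three).2 h3)
        rw [norm_inv ((j + 1 : ℕ) : ℚ_[3]), this]
        simpa using o1
    have e : AA j (M + 1) * ((j : ℚ_[3]) + M + 2) / ((j + 1) * (2 * M + 1)) =
        AA j (M + 1) * (((j + 1 + M + 1 : ℕ) : ℚ_[3]) *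
          (((j + 1 : ℕ) : ℚ_[3])⁻¹ * ((2 * M + 1 : ℕ) : ℚ_[3])⁻¹)) := by
      rw [← mul_inv]; push_cast; ring
    rw [e, norm_mul, norm_mul, norm_mul, sub_eq_neg_add, zpow_add₀ (by norm_num)]
    calc _ ≤ 1 * ((3 : ℝ) ^ (-(s : ℤ)) * (3 : ℝ) ^ (Nat.log 3 (2 * (j + 1) + 1) : ℤ)) := by
          gcongr
          exact norm_AA _ _
      _ = _ := by ring

lemma log_bound (j : ℕ) : 2 * Nat.log 3 (2 * j + 1) ≤ j + 1 := by
  have h := Nat.pow_log_le_self 3 (show 2 * j + 1 ≠ 0 by omega)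
  have g : ∀ L : ℕ, 4 * L ≤ 3 ^ L + 1 := by
    intro L
    induction L with
    | zero => simp
    | succ L ih =>
      rcases Nat.eq_zero_or_pos L with rfl | hL
      · norm_num
      · have : 3 ^ 1 ≤ 3 ^ L := Nat.pow_le_pow_right (by norm_num) hL
        rw [pow_succ]; omega
  have := g (Nat.log 3 (2 * j + 1))
  omega

lemma pow_close (w : ℚ_[3]) (e : ℕ) (hw : ‖w‖ ≤ 3⁻¹) (hd : ‖w - -3‖ ≤ (3 : ℝ) ^ (-(e : ℤ)))
    (j : ℕ) : ‖w ^ j - (-3) ^ j‖ ≤ (3 : ℝ) ^ (1 - (e : ℤ) - j) := by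
  have n3 : ‖(-3 : ℚ_[3])‖ = 3⁻¹ := by
    rw [norm_neg]; simpa using Padic.norm_p (p := 3)
  induction j with
  | zero => simp; positivity
  | succ j ih =>
    have : w ^ (j + 1) - (-3) ^ (j + 1) = w * (w ^ j - (-3) ^ j) + (w - -3) * (-3) ^ j := by ring
    rw [this]
    refine norm_add_le_of ?_ ?_
    · rw [norm_mul]
      calc _ ≤ 3⁻¹ * (3 : ℝ) ^ (1 - (e : ℤ) - j) := by gcongr
        _ = _ := by
          rw [← zpow_neg_one, ← zpow_add₀ (by norm_num)]; congr 1; push_cast; ring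
    · rw [norm_mul, norm_pow, n3]
      calc _ ≤ (3 : ℝ) ^ (-(e : ℤ)) * (3⁻¹) ^ j := by gcongr
        _ = _ := by
          rw [inv_pow, ← zpow_natCast, ← zpow_neg, ← zpow_add₀ (by norm_num)]
          congr 1; push_cast; ring

/-- Sun's conjecture (ii), first part: for `m ≡ 1 (mod 3)` and `n ≥ 1`,
`ν₃((1/n)·∑_{k<n} (−1)^k C(n−1,k) C(2k,k)/m^k) ≥ min{ν₃(n), ν₃(m−1)} − 1`
(with `ν₃(0) = ∞`), expressed via the 3-adic norm in `ℚ_[3]`. -/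
theorem stmt_5 (m : ℤ) (hm : m ≡ 1 [ZMOD 3]) (n : ℕ) (hn : 0 < n) (e : ℕ)
    (he : (e : ℕ∞) ≤ min (padicValNat 3 n : ℕ∞) (emultiplicity (3 : ℤ) (m - 1))) :
    ‖((n : ℚ_[3]))⁻¹ * ∑ k ∈ Finset.range n,
        (-1) ^ k * (Nat.choose (n - 1) k : ℚ_[3]) * (Nat.choose (2 * k) k : ℚ_[3]) /
          (m : ℚ_[3]) ^ k‖ ≤ (3 : ℝ) ^ (1 - (e : ℤ)) := by
  obtain ⟨N, rfl⟩ : ∃ N, n = N + 1 := ⟨n - 1, by omega⟩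
  have he1 : e ≤ padicValNat 3 (N + 1) := by exact_mod_cast he.trans (min_le_left _ _)
  have he2 : (3 : ℤ) ^ e ∣ m - 1 := pow_dvd_of_le_emultiplicity (he.trans (min_le_right _ _))
  have hm3 : ¬ (3 : ℤ) ∣ m := by
    intro h; have := hm; unfold Int.ModEq at this; omega
  have hm0 : m ≠ 0 := by rintro rfl; simp at hm3
  have hmQ : (m : ℚ_[3]) ≠ 0 := by exact_mod_cast hm0
  have hmn : ‖(m : ℚ_[3])‖ = 1 := by
    refine le_antisymm (Padic.norm_int_le_one m) (not_lt.1 fun h => hm3 ?_)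
    exact_mod_cast (Padic.norm_intCast_lt_one_iff (p := 3)).1 h
  have hs : ‖((N + 1 : ℕ) : ℚ_[3])‖ ≤ (3 : ℝ) ^ (-(e : ℤ)) := by
    rw [norm_nat_eq _ (by omega)]
    exact zpow_le_zpow_right₀ (by norm_num) (by omega)
  set w : ℚ_[3] := 1 - 4 / m with hwdef
  have hw : ‖w‖ ≤ 3⁻¹ := by
    have : w = ((m - 4 : ℤ) : ℚ_[3]) / m := by rw [hwdef]; push_cast; field_simp
    rw [this, norm_div, hmn, div_one]
    have := (Padic.norm_int_le_pow_iff_dvd (p := 3) (m - 4) 1).2 (by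
      have := hm; unfold Int.ModEq at this; push_cast; omega)
    simpa using this
  have hwd : ‖w - -3‖ ≤ (3 : ℝ) ^ (-(e : ℤ)) := by
    have : w - -3 = 4 * ((m - 1 : ℤ) : ℚ_[3]) / m := by rw [hwdef]; push_cast; field_simp; ring
    rw [this, norm_div, hmn, div_one, norm_mul, norm_four, one_mul]
    have := (Padic.norm_int_le_pow_iff_dvd (p := 3) (m - 1) e).2 (by exact_mod_cast he2)
    simpa using this
  have n3 : ‖(-3 : ℚ_[3])‖ = 3⁻¹ := by
    rw [norm_neg]; simpa using Padic.norm_p (p := 3)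
  rw [Nat.add_sub_cancel, S_eq _ hmQ, ← hwdef]
  have hnQ : ((N + 1 : ℕ) : ℚ_[3]) ≠ 0 := by exact_mod_cast Nat.succ_ne_zero N
  have decomp : ((N + 1 : ℕ) : ℚ_[3])⁻¹ * ∑ j ∈ Finset.range (N + 1), cc j * cc (N - j) * w ^ j =
      ∑ j ∈ Finset.range (N + 1), (w ^ j * ((2 * j + 1 : ℕ) : ℚ_[3])⁻¹ * (AA j (N - j) - AA 0 N)
        + AA 0 N * ((w ^ j - (-3) ^ j) * ((2 * j + 1 : ℕ) : ℚ_[3])⁻¹)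
        - AA 0 N * ((-3) ^ j * ((2 * j + 1 : ℕ) : ℚ_[3])⁻¹ *
            ((-1) ^ (2 * j) * (N.choose (2 * j) : ℚ_[3]) - 1)))
      + AA 0 N * (((N + 1 : ℕ) : ℚ_[3])⁻¹ *
        ∑ j ∈ Finset.range (N + 1), ((N + 1).choose (2 * j + 1) : ℚ_[3]) * (-3) ^ j) := by
    rw [Finset.mul_sum, Finset.mul_sum, Finset.mul_sum, ← Finset.sum_add_distrib]
    refine Finset.sum_congr rfl fun j hj => ?_
    have hj := Finset.mem_range.1 hj
    have hA : ((2 * j + 1 : ℕ) : ℚ_[3])⁻¹ * AA j (N - j) =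
        ((N + 1 : ℕ) : ℚ_[3])⁻¹ * (cc j * cc (N - j)) := by
      have o := odd_ne j
      have e : (j : ℚ_[3]) + ((N - j : ℕ) : ℚ_[3]) + 1 = ((N + 1 : ℕ) : ℚ_[3]) := by
        rw [Nat.cast_sub (by omega)]; push_cast; ring
      unfold AA
      rw [e]
      push_cast at hnQ ⊢
      field_simp
    have hC : ((N + 1 : ℕ) : ℚ_[3])⁻¹ * ((N + 1).choose (2 * j + 1) : ℚ_[3]) =
        ((2 * j + 1 : ℕ) : ℚ_[3])⁻¹ * N.choose (2 * j) := by
      have h : ((N + 1 : ℕ) : ℚ_[3]) * N.choose (2 * j) =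
          ((N + 1).choose (2 * j + 1)) * ((2 * j + 1 : ℕ) : ℚ_[3]) := by
        exact_mod_cast Nat.add_one_mul_choose_eq N (2 * j)
      have o : ((2 * j + 1 : ℕ) : ℚ_[3]) ≠ 0 := by exact_mod_cast Nat.succ_ne_zero (2 * j)
      rw [inv_mul_eq_iff_eq_mul₀ hnQ, mul_left_comm, h]
      field_simp
    rw [pow_mul (-1 : ℚ_[3]), neg_one_sq, one_pow]
    linear_combination (-w ^ j) * hA - AA 0 N * (-3) ^ j * hC
  rw [decomp]
  have hA0 := norm_AA 0 N
  refine norm_add_le_of (norm_sum_le_of (by positivity) _ fun j hj => ?_) ?_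
  · have o := norm_nat_ge (2 * j + 1) (by omega)
    have hlog := log_bound j
    have hlog' : Nat.log 3 (2 * j + 1) ≤ j := by
      rcases Nat.eq_zero_or_pos j with rfl | h
      · simp
      · omega
    have hp : ∀ v : ℚ_[3], ‖v‖ ≤ 3⁻¹ → ‖v ^ j‖ ≤ (3 : ℝ) ^ (-(j : ℤ)) := by
      intro v hv
      rw [norm_pow, zpow_neg, zpow_natCast, ← inv_pow]
      gcongr
    refine norm_sub_le_of (norm_add_le_of ?_ ?_) ?_
    · have c := AA_close e j (N - j) (by rwa [show j + (N - j) + 1 = N + 1 by omega])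
      rw [show j + (N - j) = N by omega] at c
      rw [norm_mul, norm_mul]
      calc _ ≤ (3 : ℝ) ^ (-(j : ℤ)) * (3 : ℝ) ^ (Nat.log 3 (2 * j + 1) : ℤ) *
            (3 : ℝ) ^ ((Nat.log 3 (2 * j + 1) : ℤ) - e) := by
            gcongr
            exact hp w hw
        _ ≤ _ := by
          rw [← zpow_add₀ (by norm_num), ← zpow_add₀ (by norm_num)]
          exact zpow_le_zpow_right₀ (by norm_num) (by omega)
    · have c := pow_close w e hw hwd j
      rw [norm_mul, norm_mul]
      calc _ ≤ 1 * ((3 : ℝ) ^ (1 - (e : ℤ) - j) * (3 : ℝ) ^ (Nat.log 3 (2 * j + 1) : ℤ)) := by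
            gcongr
        _ ≤ _ := by
          rw [one_mul, ← zpow_add₀ (by norm_num)]
          exact zpow_le_zpow_right₀ (by norm_num) (by omega)
    · have c := (choose_close N e hs (2 * j)).trans (zpow_le_zpow_right₀ (by norm_num)
        (show (Nat.log 3 (2 * j) : ℤ) - e ≤ (Nat.log 3 (2 * j + 1) : ℤ) - e by
          have := Nat.log_mono_right (b := 3) (show 2 * j ≤ 2 * j + 1 by omega)
          omega))
      rw [norm_mul, norm_mul, norm_mul]
      calc _ ≤ 1 * ((3 : ℝ) ^ (-(j : ℤ)) * (3 : ℝ) ^ (Nat.log 3 (2 * j + 1) : ℤ) *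
            (3 : ℝ) ^ ((Nat.log 3 (2 * j + 1) : ℤ) - e)) := by
            gcongr
            exact hp _ n3.le
        _ ≤ _ := by
          rw [one_mul, ← zpow_add₀ (by norm_num), ← zpow_add₀ (by norm_num)]
          exact zpow_le_zpow_right₀ (by norm_num) (by omega)
  · by_cases h3 : 3 ∣ N + 1
    · obtain ⟨t, ht⟩ := h3
      have := trig_zero N t (by omega)
      rw [← ht] at this
      rw [this]
      simp
      positivity
    · have e0 : e = 0 := by
        rw [padicValNat.eq_zero_of_not_dvd h3] at he1; omega
      have hN : ‖((N + 1 : ℕ) : ℚ_[3])⁻¹‖ ≤ 1 := by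
        rw [norm_inv, Padic.norm_natCast_eq_one_iff.2
            ((Nat.Prime.coprime_iff_not_dvd Nat.prime_three).2 h3)]
        simp
      refine (norm_mul_le_one hA0 (norm_mul_le_one hN (norm_sum_le_of zero_le_one _
        fun j _ => norm_mul_le_one (IsUltrametricDist.norm_natCast_le_one ℚ_[3] _) ?_))).trans ?_
      · rw [norm_pow, n3]
        exact pow_le_one₀ (by norm_num) (by norm_num)
      · subst e0; norm_num
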